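/- Let p be a prime and let (G, H, T) be an RCC loop folder of order p (not assumed faithful) such that ⟨T⟩ = G. Then G is abelian. -/

import Mathlib

/-- A loop folder `(G, H, T)`: `T` contains `1` and is a transversal for the right cosets
of every conjugate `H^g = g⁻¹Hg` of `H` in `G` (note `H^g x = H^g t ↔ g*(x*t⁻¹)*g⁻¹ ∈ H`). -/
def IsLoopFolder {G : Type*} [Group G] (H : Subgroup G) (T : Set G) : Prop :=
  (1 : G) ∈ T ∧ ∀ g x : G, ∃! t, t ∈ T ∧ g * (x * t⁻¹) * g⁻¹ ∈ H

/-- The loop folder is right conjugacy closed: `T` is invariant under conjugation by `G`. -/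
def IsRCC {G : Type*} [Group G] (T : Set G) : Prop :=
  ∀ t ∈ T, ∀ g : G, g⁻¹ * t * g ∈ T

/-- The loop folder is faithful: the core `⋂_{g ∈ G} g⁻¹Hg` of `H` in `G` is trivial. -/
def IsFaithfulFolder {G : Type*} [Group G] (H : Subgroup G) : Prop :=
  ∀ x : G, (∀ g : G, g * x * g⁻¹ ∈ H) → x = 1

/-!
Conjugation gives a representation of `G` by permutations of the `p - 1` nontrivial elements of `T`,
whose kernel is `Z(G)` because `T` generates `G`. So `[G : Z(G)]` divides `(p - 1)!` and is prime to
`[G : H] = p`, which forces `H Z(G) = G`. It follows that `H` contains the commutator subgroup.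
Conjugate elements of `T` then lie in one coset of `H`, so they are equal: `T` is central.
-/

open Subgroup
open scoped Nat

section

variable {G : Type*} [Group G] {H : Subgroup G} {S T : Set G}

theorem sup_eq_top_of_coprime_index {K : Subgroup G} (h : H.index.Coprime K.index) :
    H ⊔ K = ⊤ :=
  index_eq_one.mp <|
    Nat.eq_one_of_dvd_coprimes h (index_dvd_of_le le_sup_left) (index_dvd_of_le le_sup_right)

theorem commutator_le_of_sup_center_eq_top (h : H ⊔ center G = ⊤) : commutator G ≤ H := by
  have hnormal : H.Normal := normalizer_eq_top_iff.mp <|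
    top_unique <| h ▸ sup_le le_normalizer (center_le_normalizer _)
  exact hnormal.commutator_le_of_self_sup_commutative_eq_top h inferInstance

theorem center_eq_centralizer_of_closure_eq_top (hS : closure S = ⊤) :
    center G = centralizer S := by
  rw [← centralizer_closure, hS, coe_top, centralizer_univ]

namespace IsRCC

theorem conj_mem_iff (hS : IsRCC S) {g s : G} : g * s * g⁻¹ ∈ S ↔ s ∈ S :=
  ⟨fun h ↦ by simpa [mul_assoc] using hS _ h g, fun h ↦ by simpa using hS s h g⁻¹⟩

theorem sdiff_one (hS : IsRCC S) : IsRCC (S \ {1}) :=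
  fun s hs g ↦ ⟨hS s hs.1 g, fun h ↦ hs.2 <| by simpa [mul_eq_one_iff_eq_inv] using h⟩

/-- The permutation representation of `G` on a conjugation-invariant subset `S`, with `g` acting
by `s ↦ g * s * g⁻¹`. -/
def conjPermHom (hS : IsRCC S) : G →* Equiv.Perm S where
  toFun g := (MulAut.toPerm G (MulAut.conj g)).subtypePerm fun _ ↦ hS.conj_mem_iff
  map_one' := by ext; simp
  map_mul' g h := by simp only [map_mul]; rfl

theorem coe_conjPermHom_apply (hS : IsRCC S) (g : G) (s : S) :
    (hS.conjPermHom g s : G) = g * s * g⁻¹ :=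
  rfl

theorem ker_conjPermHom (hS : IsRCC S) : hS.conjPermHom.ker = centralizer S := by
  ext g
  simp [MonoidHom.mem_ker, Equiv.ext_iff, Subtype.ext_iff, coe_conjPermHom_apply,
    mem_centralizer_iff, mul_inv_eq_iff_eq_mul, eq_comm (a := g * _)]

theorem index_centralizer_dvd_factorial [Finite S] (hS : IsRCC S) :
    (centralizer S).index ∣ (Nat.card S)! := by
  rw [← hS.ker_conjPermHom, index_ker, ← Nat.card_perm]
  exact card_subgroup_dvd_card _

theorem index_center_dvd_factorial_pred [Finite T] (hT : IsRCC T) (h_one : 1 ∈ T)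
    (hgen : closure T = ⊤) : (center G).index ∣ (Nat.card T - 1)! := by
  have hcard : Nat.card ↑(T \ {1}) = Nat.card T - 1 := by
    simpa only [Nat.card_coe_set_eq] using Set.ncard_sdiff_singleton_of_mem h_one
  rw [center_eq_centralizer_of_closure_eq_top ((closure_sdiff_one T).trans hgen), ← hcard]
  exact hT.sdiff_one.index_centralizer_dvd_factorial

theorem subset_center_of_isComplement (hT : IsRCC T) (hHT : IsComplement (H : Set G) T)
    (hH : commutator G ≤ H) : T ⊆ center G := by
  intro t ht
  refine mem_center_iff.mpr fun g ↦ ?_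
  have hconj : g * t * g⁻¹ ∈ T := hT.conj_mem_iff.mpr ht
  have hcoset : t * (g * t * g⁻¹)⁻¹ ∈ H := by
    have := hH <| commutator_mem_commutator (mem_top t) (mem_top g)
    simpa [commutatorElement_def, mul_assoc] using this
  have heq := (isComplement_iff_existsUnique_mul_inv_mem.mp hHT t).unique
    (y₁ := ⟨g * t * g⁻¹, hconj⟩) (y₂ := ⟨t, ht⟩) hcoset (by simp)
  exact mul_inv_eq_iff_eq_mul.mp (congrArg Subtype.val heq)

end IsRCC

theorem IsLoopFolder.isComplement (h : IsLoopFolder H T) : IsComplement (H : Set G) T :=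
  isComplement_iff_existsUnique_mul_inv_mem.mpr fun x ↦ by
    obtain ⟨t, ⟨ht, hxt⟩, huniq⟩ := h.2 1 x
    exact ⟨⟨t, ht⟩, by simpa using hxt,
      fun s hs ↦ Subtype.ext <| huniq s ⟨s.2, by simpa using hs⟩⟩

end

theorem stmt_2_general {G : Type*} [Group G] (p : ℕ) (hp : p.Prime)
    (H : Subgroup G) (T : Set G)
    (hLF : IsLoopFolder H T) (hRCC : IsRCC T)
    (hord : Nat.card T = p) (hgen : Subgroup.closure T = ⊤) :
    ∀ a b : G, a * b = b * a := by
  have : Finite T := Nat.finite_of_card_ne_zero (hord ▸ hp.ne_zero)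
  have hindex : H.index = p := hLF.isComplement.card_right.symm.trans hord
  have hcenter : (center G).index ∣ (p - 1)! :=
    hord ▸ hRCC.index_center_dvd_factorial_pred hLF.1 hgen
  have hcoprime : H.index.Coprime (center G).index :=
    hindex ▸ (hp.coprime_factorial_of_lt (Nat.sub_one_lt hp.ne_zero)).coprime_dvd_right hcenter
  have hcomm : commutator G ≤ H :=
    commutator_le_of_sup_center_eq_top (sup_eq_top_of_coprime_index hcoprime)
  have htop : center G = ⊤ := top_unique <| hgen ▸
    (closure_le _).mpr (hRCC.subset_center_of_isComplement hLF.isComplement hcomm)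
  exact fun a b ↦ mem_center_iff.mp (htop ▸ mem_top b) a

/-- An RCC loop folder of prime order `p` (not assumed faithful) with `⟨T⟩ = G` has
abelian `G`. -/
theorem stmt_2 {G : Type*} [Group G] [Finite G] (p : ℕ) (hp : p.Prime)
    (H : Subgroup G) (T : Set G)
    (hLF : IsLoopFolder H T) (hRCC : IsRCC T)
    (hord : Nat.card T = p) (hgen : Subgroup.closure T = ⊤) :
    ∀ a b : G, a * b = b * a :=
  stmt_2_general p hp H T hLF hRCC hord hgen
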